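/- Let n ≥ 3 be odd and let σ : (ZMod n) × Bool → ZMod 3 have all values in {1, 2} ⊆ ZMod 3 and satisfy σ(i,false) + σ(i,true) + σ(i+1,true) + σ(i+1,false) = 0 for every i ∈ ZMod n. Then σ(i,true) = −σ(i,false) for every i ∈ ZMod n; in particular there is no index i with σ(i,false) = σ(i,true). -/

import Mathlib

/-!
The rung sum `σ (i, false) + σ (i, true)` changes sign from each rung to the next. Going once
around a closed ladder with an odd number of rungs shows that it is its own negative, so it
vanishes when there is no `2`-torsion.
-/

open Function

theorem self_eq_neg_iff_of_isSMulRegular_two {A : Type*} [AddGroup A] (hA : IsSMulRegular A 2)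
    {a : A} : a = -a ↔ a = 0 := by
  rw [eq_neg_iff_add_eq_zero, ← two_nsmul]
  exact ⟨hA.right_eq_zero_of_smul, fun ha ↦ by rw [ha, nsmul_zero]⟩

theorem isSMulRegular_two_zmod {m : ℕ} (hm : Odd m) : IsSMulRegular (ZMod m) 2 := by
  have hcard : (Nat.card (ZMod m)).Coprime 2 := by simpa using hm
  exact hcard.nsmul_right_bijective.injective

theorem antiperiodic_eq_zero_of_odd_nsmul_eq_zero {G A : Type*} [AddMonoid G] [AddGroup A]
    (hA : IsSMulRegular A 2) {f : G → A} {c : G} (hf : Antiperiodic f c) {n : ℕ} (hn : Odd n)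
    (hc : n • c = 0) (x : G) : f x = 0 := by
  obtain ⟨k, rfl⟩ := hn
  have hx : f x = -f x := by simpa only [hc, add_zero] using hf.odd_nsmul_antiperiodic k x
  exact (self_eq_neg_iff_of_isSMulRegular_two hA).mp hx

theorem antiperiodic_rung_sum {G A : Type*} [Add G] [AddCommGroup A] {c : G} {σ : G × Bool → A}
    (hface : ∀ i, σ (i, false) + σ (i, true) + σ (i + c, true) + σ (i + c, false) = 0) :
    Antiperiodic (fun i ↦ σ (i, false) + σ (i, true)) c := fun i ↦ by
  beta_reduce
  rw [eq_neg_iff_add_eq_zero, ← hface i]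
  abel

theorem heawood_quad_odd_antisym_general {G A : Type*} [AddMonoid G] [AddCommGroup A]
    (hA : IsSMulRegular A 2) {n : ℕ} (hn : Odd n) {c : G} (hc : n • c = 0) (σ : G × Bool → A)
    (hval : ∀ i, σ (i, false) ≠ 0)
    (hface : ∀ i, σ (i, false) + σ (i, true) + σ (i + c, true) + σ (i + c, false) = 0) :
    (∀ i, σ (i, true) = -σ (i, false)) ∧ ¬ ∃ i, σ (i, false) = σ (i, true) := by
  have antisymm (i : G) : σ (i, true) = -σ (i, false) :=
    eq_neg_of_add_eq_zero_right <|
      antiperiodic_eq_zero_of_odd_nsmul_eq_zero hA (antiperiodic_rung_sum hface) hn hc i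
  refine ⟨antisymm, fun ⟨i, hi⟩ ↦ hval i ?_⟩
  exact (self_eq_neg_iff_of_isSMulRegular_two hA).mp (hi.trans (antisymm i))

/-- For odd `n ≥ 3`, any function `σ : (ZMod n) × Bool → ZMod 3` with all values in
`{1, 2}` that satisfies the propriety conditions of the quadrilateral faces of `CL_n`
must satisfy `σ (i, true) = -σ (i, false)` for every `i`; in particular there is no
index `i` with `σ (i, false) = σ (i, true)`. -/
theorem heawood_quad_odd_antisym (n : ℕ) (hn : 3 ≤ n) (hpar : Odd n)
    (σ : ZMod n × Bool → ZMod 3)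
    (hval : ∀ v, σ v = 1 ∨ σ v = 2)
    (hface : ∀ i : ZMod n,
      σ (i, false) + σ (i, true) + σ (i + 1, true) + σ (i + 1, false) = 0) :
    (∀ i : ZMod n, σ (i, true) = -σ (i, false)) ∧
    ¬ ∃ i : ZMod n, σ (i, false) = σ (i, true) := by
  refine heawood_quad_odd_antisym_general (isSMulRegular_two_zmod (by decide)) hpar (by simp) σ
    (fun i ↦ ?_) hface
  rcases hval (i, false) with h | h <;> rw [h] <;> decide
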